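/- Let Γ be a group acting transitively on an infinite set X, and for every real number r > 0 let G_r ⊆ Γ be a finite subset such that G_r ⊆ G_s whenever 0 < r ≤ s, and such that the union of the G_r over all r > 0 is all of Γ. Then there exists R > 0 such that one of the following holds: either for every r ≥ R every orbit on X of the subgroup ⟨G_r⟩ generated by G_r is infinite, or for every r ≥ R the action of ⟨G_r⟩ on X has infinitely many finite orbits. -/

import Mathlib

/-- the "orbit cases" lemma.  Let `Γ` act transitively on an infinite set
`X`, and let `G r ⊆ Γ` (for `r > 0`) be finite sets, monotone in `r` and exhausting `Γ`.
Then there is `R > 0` such that either for every `r ≥ R` all orbits of the subgroup generated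
by `G r` are infinite, or for every `r ≥ R` the action of that subgroup has infinitely many
finite orbits. -/
theorem stmt_3 {Γ X : Type*} [Group Γ] [MulAction Γ X] [MulAction.IsPretransitive Γ X]
    [Infinite X] (G : ℝ → Set Γ)
    (hfin : ∀ r : ℝ, 0 < r → (G r).Finite)
    (hmono : ∀ r s : ℝ, 0 < r → r ≤ s → G r ⊆ G s)
    (hexh : ∀ g : Γ, ∃ r : ℝ, 0 < r ∧ g ∈ G r) :
    ∃ R : ℝ, 0 < R ∧
      ((∀ r : ℝ, R ≤ r → ∀ x : X, (MulAction.orbit (Subgroup.closure (G r)) x).Infinite) ∨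
       (∀ r : ℝ, R ≤ r →
         {s : Set X | (∃ x : X, s = MulAction.orbit (Subgroup.closure (G r)) x) ∧
           s.Finite}.Infinite)) := by
  by_cases h2 : ∀ r : ℝ, 1 ≤ r →
         {s : Set X | (∃ x : X, s = MulAction.orbit (Subgroup.closure (G r)) x) ∧
           s.Finite}.Infinite
  · exact ⟨1, one_pos, Or.inr h2⟩
  simp only [not_forall, Set.not_infinite] at h2
  obtain ⟨r₀, hr₀, hf⟩ := h2
  have hpos : 0 < r₀ := by linarith
  -- the union of the finite orbits at radius `r₀` is finite
  have hF : {x : X | (MulAction.orbit (Subgroup.closure (G r₀)) x).Finite}.Finite := by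
    have hf' := Set.Finite.sUnion hf (fun t ht => ht.2)
    refine hf'.subset ?_
    intro x hx
    exact ⟨_, ⟨⟨x, rfl⟩, hx⟩, MulAction.mem_orbit_self x⟩
  have hsub : ∀ r s : ℝ, 0 < r → r ≤ s → ∀ x : X,
      MulAction.orbit (Subgroup.closure (G r)) x ⊆ MulAction.orbit (Subgroup.closure (G s)) x := by
    rintro r s hr hrs x _ ⟨⟨g, hg⟩, rfl⟩
    exact ⟨⟨g, Subgroup.closure_mono (hmono r s hr hrs) hg⟩, rfl⟩
  obtain ⟨y, hy⟩ := hF.exists_notMem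
  choose g hg using fun x : X => MulAction.exists_smul_eq Γ x y
  choose ρ hρ hρm using hexh
  obtain ⟨B, hB⟩ := (hF.image (fun x => ρ (g x))).bddAbove
  refine ⟨max r₀ B, lt_max_of_lt_left hpos, Or.inl ?_⟩
  intro r hr x hx
  have hr1 : r₀ ≤ r := le_trans (le_max_left _ _) hr
  have hr2 : B ≤ r := le_trans (le_max_right _ _) hr
  have hx0 := hx.subset (hsub r₀ r hpos hr1 x)
  have hle : ρ (g x) ≤ B := hB ⟨x, hx0, rfl⟩
  have hgm : g x ∈ Subgroup.closure (G r) :=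
    Subgroup.subset_closure (hmono _ _ (hρ _) (hle.trans hr2) (hρm _))
  have hyx : y ∈ MulAction.orbit (Subgroup.closure (G r)) x := ⟨⟨g x, hgm⟩, hg x⟩
  apply hy
  have heq := MulAction.orbit_eq_iff.mpr hyx
  exact (heq ▸ hx : (MulAction.orbit (Subgroup.closure (G r)) y).Finite).subset
    (hsub r₀ r hpos hr1 y)
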